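/- arXiv:2501.16339 — 2 statements merged into one kernel-verified Lean document; each statement's English description precedes it below -/
import Mathlib

section
/- The map j : SO_{2l}(J_{2l,ρ}) → GL_{2l+1}(F) defined by j(g) = M^{-1}·ĝ·M is an injective group homomorphism whose image is contained in SO_{2l+1}(F); that is, for every g ∈ SO_{2l}(J_{2l,ρ}) one has det(j(g)) = 1 and ᵀj(g)·J_{2l+1}·j(g) = J_{2l+1}, and j(g·g') = j(g)·j(g'), with j(g) = j(g') only if g = g'. -/
/-!
Inserting the middle row and column identifies `ĝ` with the block-diagonal matrix `diag(g, 1)`, so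
`g ↦ ĝ` is multiplicative, injective and preserves determinants, and `ĝ` preserves any form
`K = diag(Jrho, c)` whenever `g` preserves `Jrho`. For `c = ρ` the matrix `M` is a change of basis
taking `K` to the split form: `Mᵀ * K * M = Jmat` (`Mmat_form`). Indeed `K` is the antidiagonal form
with its central block replaced by `diag(1, ρ, -ρ)`, and the columns `(0, 1/2, 1/2)`, `(1, 0, 0)`,
`(0, 1/ρ, -1/ρ)` of the central block of `M` have Gram matrix `J_3` for `diag(1, ρ, -ρ)`.
As `Jmat` squares to `1`, the same identity shows that `M` is invertible, and conjugation by `M`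
transports everything to `Jmat`.
-/

open Matrix BigOperators

noncomputable section

/-- Entry of a square matrix read with 0-indexed natural-number indices (`0` out of range). -/
def ent {F : Type*} [Field F] {N : ℕ} (g : Matrix (Fin N) (Fin N) F) (i j : ℕ) : F :=
  if h : i < N ∧ j < N then g ⟨i, h.1⟩ ⟨j, h.2⟩ else 0

/-- The antidiagonal matrix `J_n` (entry `(i,j)` is `1` iff `i+j = n+1` in 1-indexed terms). -/
def Jmat (F : Type*) [Field F] (n : ℕ) : Matrix (Fin n) (Fin n) F :=
  Matrix.of fun i j => if (i : ℕ) + (j : ℕ) + 1 = n then 1 else 0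

/-- `J_{2l,ρ} = diag(I_{l-1}, [[0,1],[-ρ,0]], I_{l-1}) · J_{2l}`. -/
def Jrho (F : Type*) [Field F] (l : ℕ) (ρ : F) : Matrix (Fin (2*l)) (Fin (2*l)) F :=
  (Matrix.of fun i j : Fin (2*l) =>
    if (i : ℕ) = l - 1 ∧ (j : ℕ) = l then 1
    else if (i : ℕ) = l ∧ (j : ℕ) = l - 1 then -ρ
    else if i = j ∧ ((i : ℕ) < l - 1 ∨ l + 1 ≤ (i : ℕ)) then 1
    else 0) * Jmat F (2*l)

/-- Membership in the quasi-split even special orthogonal group `SO_{2l}(J_{2l,ρ})`. -/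
def SO2l {F : Type*} [Field F] (l : ℕ) (ρ : F) (g : Matrix (Fin (2*l)) (Fin (2*l)) F) : Prop :=
  g.det = 1 ∧ gᵀ * Jrho F l ρ * g = Jrho F l ρ

/-- Membership in `U_{SO_{2l}}`: upper triangular, all diagonal entries `1`, and in `SO_{2l}`. -/
def USO2l {F : Type*} [Field F] (l : ℕ) (ρ : F) (g : Matrix (Fin (2*l)) (Fin (2*l)) F) : Prop :=
  SO2l l ρ g ∧ (∀ i j : Fin (2*l), (j : ℕ) < (i : ℕ) → g i j = 0) ∧ ∀ i, g i i = 1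

/-- Membership in `SO_{2l+1}(F)` (with respect to the antidiagonal form `J_{2l+1}`). -/
def SO2l1 {F : Type*} [Field F] (l : ℕ) (g : Matrix (Fin (2*l+1)) (Fin (2*l+1)) F) : Prop :=
  g.det = 1 ∧ gᵀ * Jmat F (2*l+1) * g = Jmat F (2*l+1)

/-- For `g = [[A,B],[C,D]]` in `l×l` blocks, `ĝ = [[A,0,B],[0,1,0],[C,0,D]]`,
obtained by inserting a middle row and column. -/
def hatg {F : Type*} [Field F] (l : ℕ) (g : Matrix (Fin (2*l)) (Fin (2*l)) F) :
    Matrix (Fin (2*l+1)) (Fin (2*l+1)) F :=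
  Matrix.of fun i j =>
    if (i : ℕ) = l ∨ (j : ℕ) = l then (if i = j then 1 else 0)
    else ent g (if (i : ℕ) < l then (i : ℕ) else (i : ℕ) - 1)
      (if (j : ℕ) < l then (j : ℕ) else (j : ℕ) - 1)

/-- `M = diag(I_{l-1}, M̃, I_{l-1})` with `M̃ = [[0,1,0],[1/2,0,1/(2γ)],[1/2,0,−1/(2γ)]]`
and `γ = ρ/2`. -/
def Mmat (F : Type*) [Field F] (l : ℕ) (ρ : F) : Matrix (Fin (2*l+1)) (Fin (2*l+1)) F :=
  Matrix.of fun i j =>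
    if (i : ℕ) = l - 1 then (if (j : ℕ) = l then 1 else 0)
    else if (i : ℕ) = l then
      (if (j : ℕ) = l - 1 then 1/2 else if (j : ℕ) = l + 1 then 1 / (2 * (ρ/2)) else 0)
    else if (i : ℕ) = l + 1 then
      (if (j : ℕ) = l - 1 then 1/2 else if (j : ℕ) = l + 1 then -(1 / (2 * (ρ/2))) else 0)
    else if i = j then 1 else 0

/-- The embedding `j : SO_{2l}(J_{2l,ρ}) → SO_{2l+1}(F)`, `j(g) = M⁻¹·ĝ·M`. -/
def jmap {F : Type*} [Field F] (l : ℕ) (ρ : F) (g : Matrix (Fin (2*l)) (Fin (2*l)) F) :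
    Matrix (Fin (2*l+1)) (Fin (2*l+1)) F :=
  (Mmat F l ρ)⁻¹ * hatg l g * Mmat F l ρ

/-! ### Inserting a middle row and column -/

/-- The bijection sending the middle index `l` of `Fin (2 * l + 1)` to the extra point and the
other indices, in increasing order, to `Fin (2 * l)`. -/
def midEquiv (l : ℕ) : Fin (2*l+1) ≃ Fin (2*l) ⊕ Unit :=
  (finSuccEquiv' (⟨l, by omega⟩ : Fin (2*l+1))).trans (Equiv.optionEquivSumPUnit _)

/-- The matrix `[[A,0,B],[0,c,0],[C,0,D]]` obtained from `g = [[A,B],[C,D]]`, as a reindexed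
block-diagonal matrix `diag(g, c)`. -/
def midInsert {F : Type*} [Field F] (l : ℕ) (c : F) (g : Matrix (Fin (2*l)) (Fin (2*l)) F) :
    Matrix (Fin (2*l+1)) (Fin (2*l+1)) F :=
  (fromBlocks g 0 0 (Matrix.of fun _ _ : Unit => c)).submatrix (midEquiv l) (midEquiv l)

theorem midEquiv_mid (l : ℕ) (h : l < 2*l+1) : midEquiv l ⟨l, h⟩ = Sum.inr () := by
  simp [midEquiv]

theorem midEquiv_succAbove (l : ℕ) (h : l < 2*l+1) (k : Fin (2*l)) :
    midEquiv l (Fin.succAbove ⟨l, h⟩ k) = Sum.inl k := by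
  simp [midEquiv]

theorem succAbove_mid_val (l : ℕ) (h : l < 2*l+1) (k : Fin (2*l)) :
    ((Fin.succAbove (⟨l, h⟩ : Fin (2*l+1)) k : Fin (2*l+1)) : ℕ) =
      if (k : ℕ) < l then (k : ℕ) else k + 1 := by
  simp only [Fin.succAbove, Fin.lt_def, Fin.val_castSucc]
  split_ifs <;> simp

theorem hatg_eq {F : Type*} [Field F] (l : ℕ) (g : Matrix (Fin (2*l)) (Fin (2*l)) F) :
    hatg l g = midInsert l 1 g := by
  have hp : l < 2*l+1 := by omega
  have hne : ∀ k : Fin (2*l), (Fin.succAbove (⟨l, hp⟩ : Fin (2*l+1)) k : ℕ) ≠ l := fun k => by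
    rw [succAbove_mid_val]; split_ifs <;> omega
  have hval : ∀ k : Fin (2*l), (if (Fin.succAbove (⟨l, hp⟩ : Fin (2*l+1)) k : ℕ) < l
      then (Fin.succAbove (⟨l, hp⟩ : Fin (2*l+1)) k : ℕ)
      else (Fin.succAbove (⟨l, hp⟩ : Fin (2*l+1)) k : ℕ) - 1) = k := fun k => by
    rw [succAbove_mid_val]; split_ifs <;> omega
  ext i j
  rcases Fin.eq_self_or_eq_succAbove ⟨l, hp⟩ i with rfl | ⟨i, rfl⟩ <;>
  rcases Fin.eq_self_or_eq_succAbove ⟨l, hp⟩ j with rfl | ⟨j, rfl⟩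
  · simp [hatg, midInsert, midEquiv_mid]
  · simp [hatg, midInsert, midEquiv_mid, midEquiv_succAbove, (Fin.succAbove_ne _ _).symm]
  · simp [hatg, midInsert, midEquiv_mid, midEquiv_succAbove, Fin.succAbove_ne]
  · simp only [hatg, of_apply, hne, or_self, if_false, hval]
    simp [midInsert, midEquiv_succAbove, ent]

theorem midInsert_mul {F : Type*} [Field F] (l : ℕ) (c d : F)
    (g g' : Matrix (Fin (2*l)) (Fin (2*l)) F) :
    midInsert l c g * midInsert l d g' = midInsert l (c * d) (g * g') := by
  simp only [midInsert, submatrix_mul_equiv, fromBlocks_multiply]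
  congr 1
  ext i j
  rcases i with i | i <;> rcases j with j | j <;> simp [mul_apply]

theorem midInsert_transpose {F : Type*} [Field F] (l : ℕ) (c : F)
    (g : Matrix (Fin (2*l)) (Fin (2*l)) F) :
    (midInsert l c g)ᵀ = midInsert l c gᵀ := by
  simp only [midInsert, transpose_submatrix, fromBlocks_transpose]
  rfl

theorem midInsert_det {F : Type*} [Field F] (l : ℕ) (c : F)
    (g : Matrix (Fin (2*l)) (Fin (2*l)) F) :
    (midInsert l c g).det = g.det * c := by
  simp [midInsert, det_submatrix_equiv_self]

theorem midInsert_inj {F : Type*} [Field F] (l : ℕ) (c : F)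
    {g g' : Matrix (Fin (2*l)) (Fin (2*l)) F} (h : midInsert l c g = midInsert l c g') :
    g = g' := by
  ext i j
  have := congrFun (congrFun h ((midEquiv l).symm (Sum.inl i))) ((midEquiv l).symm (Sum.inl j))
  simpa [midInsert] using this

/-! ### The change of basis `M` between the two forms -/

/-- `Jrho` is the antidiagonal form with its central `2 × 2` block replaced by `diag(1, -ρ)`. -/
theorem Jrho_apply {F : Type*} [Field F] (l : ℕ) (hl : 2 ≤ l) (ρ : F) (i j : Fin (2*l)) :
    Jrho F l ρ i j = if (i : ℕ) = l - 1 then (if (j : ℕ) = l - 1 then 1 else 0)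
      else if (i : ℕ) = l then (if (j : ℕ) = l then -ρ else 0)
      else if (i : ℕ) + j + 1 = 2*l then 1 else 0 := by
  have hJ : ∀ a : Fin (2*l), Jmat F (2*l) a j = if a = Fin.rev j then 1 else 0 := fun a => by
    simp only [Jmat, of_apply, Fin.ext_iff, Fin.val_rev]
    congr 1
    apply propext
    omega
  simp only [Jrho, mul_apply, hJ, mul_ite, mul_one, mul_zero, Finset.sum_ite_eq',
    Finset.mem_univ, if_true, of_apply]
  simp only [Fin.ext_iff, Fin.val_rev]
  split_ifs <;> first | rfl | omega

/-- The form `K = diag(Jrho, ρ)` is the antidiagonal form with its central `3 × 3` block replaced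
by `diag(1, ρ, -ρ)`. -/
theorem midInsert_Jrho_apply {F : Type*} [Field F] (l : ℕ) (hl : 2 ≤ l) (ρ : F)
    (i j : Fin (2*l+1)) :
    midInsert l ρ (Jrho F l ρ) i j = if (i : ℕ) = l - 1 then (if (j : ℕ) = l - 1 then 1 else 0)
      else if (i : ℕ) = l then (if (j : ℕ) = l then ρ else 0)
      else if (i : ℕ) = l + 1 then (if (j : ℕ) = l + 1 then -ρ else 0)
      else if (i : ℕ) + j = 2*l then 1 else 0 := by
  have hp : l < 2*l+1 := by omega
  rcases Fin.eq_self_or_eq_succAbove ⟨l, hp⟩ i with rfl | ⟨i, rfl⟩ <;>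
  rcases Fin.eq_self_or_eq_succAbove ⟨l, hp⟩ j with rfl | ⟨j, rfl⟩ <;>
  simp only [midInsert, submatrix_apply, midEquiv_mid, midEquiv_succAbove, succAbove_mid_val,
    fromBlocks_apply₁₁, fromBlocks_apply₁₂, fromBlocks_apply₂₁, fromBlocks_apply₂₂, of_apply,
    Matrix.zero_apply, Jrho_apply l hl] <;>
  split_ifs <;> first | rfl | omega

/-- Pairing a column of `M` with a vector; the central columns have support in
`{l - 1, l, l + 1}` and the others are standard basis vectors. -/
theorem sum_Mmat_mul {F : Type*} [Field F] (l : ℕ) (hl : 2 ≤ l) (ρ : F) (h2 : (2 : F) ≠ 0)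
    (i : Fin (2*l+1)) (f : Fin (2*l+1) → F) :
    ∑ a, Mmat F l ρ a i * f a =
      if (i : ℕ) = l - 1 then 1/2 * f ⟨l, by omega⟩ + 1/2 * f ⟨l+1, by omega⟩
      else if (i : ℕ) = l then f ⟨l-1, by omega⟩
      else if (i : ℕ) = l + 1 then 1/ρ * f ⟨l, by omega⟩ + -(1/ρ) * f ⟨l+1, by omega⟩
      else f i := by
  have hγ : 2 * (ρ/2) = ρ := mul_div_cancel₀ ρ h2
  have key : ∀ a, Mmat F l ρ a i =
      if (i : ℕ) = l - 1 then (if a = ⟨l, by omega⟩ then 1/2 else 0)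
        + (if a = ⟨l+1, by omega⟩ then 1/2 else 0)
      else if (i : ℕ) = l then (if a = ⟨l-1, by omega⟩ then 1 else 0)
      else if (i : ℕ) = l + 1 then (if a = ⟨l, by omega⟩ then 1/ρ else 0)
        + (if a = ⟨l+1, by omega⟩ then -(1/ρ) else 0)
      else if a = i then 1 else 0 := fun a => by
    simp only [Mmat, of_apply, hγ, Fin.ext_iff]
    split_ifs <;> first | omega | simp
  simp only [key]
  split_ifs <;> simp [add_mul, Finset.sum_add_distrib, ite_mul]

/-- The entries of `Mᵀ * K` for `K = diag(Jrho, ρ)`. -/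
theorem sum_Mmat_mul_form {F : Type*} [Field F] (l : ℕ) (hl : 2 ≤ l) (ρ : F) (h2 : (2 : F) ≠ 0)
    (hρ : ρ ≠ 0) (i b : Fin (2*l+1)) :
    ∑ a, Mmat F l ρ a i * midInsert l ρ (Jrho F l ρ) a b =
      if (i : ℕ) = l - 1 then (if (b : ℕ) = l then ρ/2 else if (b : ℕ) = l + 1 then -(ρ/2) else 0)
      else if (i : ℕ) = l then (if (b : ℕ) = l - 1 then 1 else 0)
      else if (i : ℕ) = l + 1 then (if (b : ℕ) = l ∨ (b : ℕ) = l + 1 then 1 else 0)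
      else if (i : ℕ) + b = 2*l then 1 else 0 := by
  have e1 : l ≠ l - 1 := by omega
  have e2 : l + 1 ≠ l - 1 := by omega
  have e5 : l + 1 ≠ l := by omega
  rw [sum_Mmat_mul l hl ρ h2]
  simp only [midInsert_Jrho_apply l hl, e1, e2, e5, if_true, if_false]
  by_cases h1 : (i : ℕ) = l - 1
  · simp only [h1, if_true]
    split_ifs <;> first | omega | (field_simp; try ring)
  by_cases h3 : (i : ℕ) = l
  · simp only [h3, e1, if_true, if_false]
  by_cases h4 : (i : ℕ) = l + 1
  · simp only [h4, e2, e5, if_true, if_false]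
    split_ifs <;> first | omega | simp [hρ]
  · simp only [h1, h3, h4, if_false]

/-- `M` takes the form `diag(Jrho, ρ)` to the split antidiagonal form. -/
theorem Mmat_form {F : Type*} [Field F] (l : ℕ) (hl : 2 ≤ l) (ρ : F) (h2 : (2 : F) ≠ 0)
    (hρ : ρ ≠ 0) :
    (Mmat F l ρ)ᵀ * midInsert l ρ (Jrho F l ρ) * Mmat F l ρ = Jmat F (2*l+1) := by
  ext i j
  have h : ((Mmat F l ρ)ᵀ * midInsert l ρ (Jrho F l ρ) * Mmat F l ρ) i j =
      ∑ b, Mmat F l ρ b j * ∑ a, Mmat F l ρ a i * midInsert l ρ (Jrho F l ρ) a b := by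
    simp only [mul_apply (N := Mmat F l ρ), mul_apply (M := (Mmat F l ρ)ᵀ), transpose_apply]
    exact Finset.sum_congr rfl fun _ _ => mul_comm _ _
  rw [h]
  have e1 : l ≠ l - 1 := by omega
  have e2 : l + 1 ≠ l - 1 := by omega
  have e3 : l - 1 ≠ l := by omega
  have e4 : l - 1 ≠ l + 1 := by omega
  have e5 : l + 1 ≠ l := by omega
  simp only [sum_Mmat_mul_form l hl ρ h2 hρ]
  rw [sum_Mmat_mul l hl ρ h2]
  simp only [Jmat, of_apply, e1, e2, e3, e4, e5, if_true, if_false, or_true, true_or, or_self]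
  by_cases h1 : (i : ℕ) = l - 1
  · simp only [h1, if_true]
    split_ifs <;> first | omega | (field_simp; try ring)
  by_cases h3 : (i : ℕ) = l
  · simp only [h3, e1, if_true, if_false]
    split_ifs <;> first | omega | simp
  by_cases h4 : (i : ℕ) = l + 1
  · simp only [h4, e2, e5, if_true, if_false]
    split_ifs <;> first | omega | (field_simp; try norm_num)
  · simp only [h1, h3, h4, if_false]
    split_ifs <;> first | omega | simp

theorem Jmat_mul_self (F : Type*) [Field F] (n : ℕ) : Jmat F n * Jmat F n = 1 := by
  have hJ : ∀ a j : Fin n, Jmat F n a j = if a = Fin.rev j then 1 else 0 := fun a j => by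
    simp only [Jmat, of_apply, Fin.ext_iff, Fin.val_rev]
    congr 1
    apply propext
    omega
  ext i j
  simp [mul_apply, hJ, one_apply]

theorem Mmat_isUnit_det {F : Type*} [Field F] (l : ℕ) (hl : 2 ≤ l) (ρ : F) (h2 : (2 : F) ≠ 0)
    (hρ : ρ ≠ 0) : IsUnit (Mmat F l ρ).det := by
  apply isUnit_det_of_left_inverse
    (B := Jmat F (2*l+1) * ((Mmat F l ρ)ᵀ * midInsert l ρ (Jrho F l ρ)))
  rw [Matrix.mul_assoc, Mmat_form l hl ρ h2 hρ, Jmat_mul_self]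

/-- `j(g) = M⁻¹·ĝ·M` is an injective group homomorphism
`SO_{2l}(J_{2l,ρ}) → SO_{2l+1}(F)`. -/
theorem statement4 (l : ℕ) (hl : 2 ≤ l) (F : Type*) [Field F] (h2 : (2 : F) ≠ 0)
    (ρ : F) (hρ0 : ρ ≠ 0) (hρ : ∀ x : F, x * x ≠ ρ) :
    (∀ g : Matrix (Fin (2*l)) (Fin (2*l)) F, SO2l l ρ g →
      (jmap l ρ g).det = 1 ∧
      (jmap l ρ g)ᵀ * Jmat F (2*l+1) * jmap l ρ g = Jmat F (2*l+1)) ∧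
    (∀ g g' : Matrix (Fin (2*l)) (Fin (2*l)) F, SO2l l ρ g → SO2l l ρ g' →
      jmap l ρ (g * g') = jmap l ρ g * jmap l ρ g') ∧
    (∀ g g' : Matrix (Fin (2*l)) (Fin (2*l)) F, SO2l l ρ g → SO2l l ρ g' →
      jmap l ρ g = jmap l ρ g' → g = g') := by
  have hM := Mmat_isUnit_det l hl ρ h2 hρ0
  have hMM : Mmat F l ρ * (Mmat F l ρ)⁻¹ = 1 := mul_nonsing_inv _ hM
  have hM' : ∀ g, Mmat F l ρ * jmap l ρ g = hatg l g * Mmat F l ρ := fun g => by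
    rw [jmap, Matrix.mul_assoc, ← Matrix.mul_assoc, hMM, Matrix.one_mul]
  have cancel : ∀ A B : Matrix (Fin (2*l+1)) (Fin (2*l+1)) F,
      Mmat F l ρ * A = Mmat F l ρ * B → A = B := fun A B h => by
    simpa [← Matrix.mul_assoc, nonsing_inv_mul _ hM] using congrArg ((Mmat F l ρ)⁻¹ * ·) h
  refine ⟨fun g hg => ⟨?_, ?_⟩, fun g g' _ _ => ?_, fun g g' _ _ h => ?_⟩
  · have h := congrArg det (hM' g)
    rw [det_mul, det_mul, hatg_eq, midInsert_det, hg.1, mul_comm] at h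
    simpa using hM.mul_right_cancel h
  · have hK : (hatg l g)ᵀ * midInsert l ρ (Jrho F l ρ) * hatg l g
        = midInsert l ρ (Jrho F l ρ) := by
      rw [hatg_eq, midInsert_transpose, midInsert_mul, midInsert_mul, hg.2, one_mul, mul_one]
    calc (jmap l ρ g)ᵀ * Jmat F (2*l+1) * jmap l ρ g
        = (Mmat F l ρ * jmap l ρ g)ᵀ * midInsert l ρ (Jrho F l ρ)
            * (Mmat F l ρ * jmap l ρ g) := by
          rw [← Mmat_form l hl ρ h2 hρ0, transpose_mul]
          simp only [Matrix.mul_assoc]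
      _ = (Mmat F l ρ)ᵀ * ((hatg l g)ᵀ * midInsert l ρ (Jrho F l ρ) * hatg l g)
            * Mmat F l ρ := by
          rw [hM', transpose_mul]
          simp only [Matrix.mul_assoc]
      _ = Jmat F (2*l+1) := by rw [hK, Mmat_form l hl ρ h2 hρ0]
  · apply cancel
    rw [hM', ← Matrix.mul_assoc, hM', Matrix.mul_assoc, hM', ← Matrix.mul_assoc, hatg_eq,
      hatg_eq, hatg_eq, midInsert_mul, one_mul]
  · have h' : hatg l g * Mmat F l ρ = hatg l g' * Mmat F l ρ := by rw [← hM', ← hM', h]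
    have h'' : hatg l g = hatg l g' := by
      simpa [Matrix.mul_assoc, hMM] using congrArg (· * (Mmat F l ρ)⁻¹) h'
    rw [hatg_eq, hatg_eq] at h''
    exact midInsert_inj l 1 h''
end
end

section
/- For every m ≥ 1, the map τ_m : K_m → ℂ^× given by τ_m(k) = ψ₀(p^{-2m}·(Σ_{i=1}^{l-2} k_{i,i+1} + (1/2)·k_{l-1,l+1})) is a group homomorphism, i.e., τ_m(k·k') = τ_m(k)·τ_m(k') for all k, k' ∈ K_m. Consequently ψ_m(h) = τ_m(e_m^{-1}·h·e_m) is a group homomorphism H_m → ℂ^×, and for every u ∈ U_m one has ψ_m(u) = ψ₀(Σ_{i=1}^{l-2} u_{i,i+1} + (1/2)·u_{l-1,l+1}) = ψ(u). -/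
/-!
If `k = 1 + X` and `k' = 1 + Y` with `X, Y` divisible by `p ^ m`, then
`k * k' = 1 + X + Y + X * Y`, so off the diagonal the entries of `k * k'` are the sums of those of
`k` and `k'` modulo `p ^ (2m)` (`norm_mul_sub_sub_le`). As `p` is odd, `1/2` is a `p`-adic unit,
so the linear form `lamU` is additive modulo `p ^ (2m)` (`norm_lamU_mul_le`), and `ψ₀` does not see
the error after scaling by `p ^ (-2m)`; this is the multiplicativity of `τ_m`. That of `ψ_m` follows
by conjugation. Finally, each root on which `lamU` is supported takes the value `p ^ (2m)` on
`e_m⁻¹`, so that conjugation by `e_m⁻¹` multiplies `lamU` by `p ^ (2m)` (`lamU_conj`), which cancels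
the factor `p ^ (-2m)`.
-/

open Matrix BigOperators

noncomputable section

/-- Exponent of the diagonal entry of
`e_m = diag(p^{-2m(l-1)}, …, p^{-2m}, 1, 1, p^{2m}, …, p^{2m(l-1)})`. -/
def expo (l m i : ℕ) : ℤ :=
  if i < l - 1 then -((2 * m * (l - 1 - i) : ℕ) : ℤ)
  else if l + 1 ≤ i then ((2 * m * (i - l) : ℕ) : ℤ)
  else 0

/-- The diagonal matrix `e_m`. -/
def emat (p l m : ℕ) [Fact p.Prime] : Matrix (Fin (2*l)) (Fin (2*l)) ℚ_[p] :=
  Matrix.diagonal fun i => (p : ℚ_[p]) ^ (expo l m (i : ℕ))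

/-- The diagonal matrix `e_m⁻¹`. -/
def ematInv (p l m : ℕ) [Fact p.Prime] : Matrix (Fin (2*l)) (Fin (2*l)) ℚ_[p] :=
  Matrix.diagonal fun i => (p : ℚ_[p]) ^ (-(expo l m (i : ℕ)))

/-- Membership in `K_m = (I_{2l} + p^m·M_{2l}(ℤ_p)) ∩ SO_{2l}(J_{2l,ρ})`. -/
def Km (p l m : ℕ) [Fact p.Prime] (ρ : ℚ_[p])
    (g : Matrix (Fin (2*l)) (Fin (2*l)) ℚ_[p]) : Prop :=
  SO2l l ρ g ∧
    ∀ i j : Fin (2*l), ‖g i j - (if i = j then 1 else 0)‖ ≤ (p : ℝ) ^ (-(m : ℤ))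

/-- Membership in `H_m = e_m·K_m·e_m⁻¹`. -/
def Hm (p l m : ℕ) [Fact p.Prime] (ρ : ℚ_[p])
    (h : Matrix (Fin (2*l)) (Fin (2*l)) ℚ_[p]) : Prop :=
  Km p l m ρ (ematInv p l m * h * emat p l m)

/-- Membership in `U_m = U_{SO_{2l}} ∩ H_m`. -/
def Um (p l m : ℕ) [Fact p.Prime] (ρ : ℚ_[p])
    (u : Matrix (Fin (2*l)) (Fin (2*l)) ℚ_[p]) : Prop :=
  USO2l l ρ u ∧ Hm p l m ρ u

/-- `λ(g) = Σ_{i=1}^{l-2} g_{i,i+1} + (1/2)·g_{l-1,l+1}` (1-indexed entries as in the paper). -/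
def lamU {F : Type*} [Field F] (l : ℕ) (g : Matrix (Fin (2*l)) (Fin (2*l)) F) : F :=
  (∑ i ∈ Finset.range (l - 2), ent g i (i + 1)) + (1/2) * ent g (l - 2) l

/-- `τ_m(k) = ψ₀(p^{-2m}·(Σ_{i=1}^{l-2} k_{i,i+1} + (1/2)·k_{l-1,l+1}))`. -/
def taum (p l m : ℕ) [Fact p.Prime] (ψ₀ : AddChar ℚ_[p] ℂˣ)
    (k : Matrix (Fin (2*l)) (Fin (2*l)) ℚ_[p]) : ℂˣ :=
  ψ₀ ((p : ℚ_[p]) ^ (-(2 * m : ℤ)) * lamU l k)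

/-- `ψ_m(h) = τ_m(e_m⁻¹·h·e_m)`. -/
def psim (p l m : ℕ) [Fact p.Prime] (ψ₀ : AddChar ℚ_[p] ℂˣ)
    (h : Matrix (Fin (2*l)) (Fin (2*l)) ℚ_[p]) : ℂˣ :=
  taum p l m ψ₀ (ematInv p l m * h * emat p l m)

lemma norm_mul_sub_sub_le {p N m : ℕ} [Fact p.Prime] {k k' : Matrix (Fin N) (Fin N) ℚ_[p]}
    (hk : ∀ i j, ‖k i j - (if i = j then 1 else 0)‖ ≤ (p : ℝ) ^ (-(m : ℤ)))
    (hk' : ∀ i j, ‖k' i j - (if i = j then 1 else 0)‖ ≤ (p : ℝ) ^ (-(m : ℤ)))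
    {i j : Fin N} (hij : i ≠ j) :
    ‖(k * k') i j - k i j - k' i j‖ ≤ (p : ℝ) ^ (-(2 * m : ℤ)) := by
  have hp0 : (0 : ℝ) < p := by exact_mod_cast (Fact.out : p.Prime).pos
  have h1 : (k * k') i j - k i j - k' i j = ((k - 1) * (k' - 1)) i j := by
    have : (k - 1) * (k' - 1) = k * k' - k - k' + 1 := by noncomm_ring
    rw [this]
    simp [Matrix.one_apply_ne hij]
  rw [h1, Matrix.mul_apply]
  refine IsUltrametricDist.norm_sum_le_of_forall_le_of_nonneg (by positivity) fun a _ => ?_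
  have e : (p : ℝ) ^ (-(2 * m : ℤ)) = (p : ℝ) ^ (-(m : ℤ)) * (p : ℝ) ^ (-(m : ℤ)) := by
    rw [← zpow_add₀ hp0.ne']
    congr 1
    ring
  rw [norm_mul, e]
  refine mul_le_mul ?_ ?_ (norm_nonneg _) (by positivity)
  · simpa [Matrix.one_apply] using hk i a
  · simpa [Matrix.one_apply] using hk' a j

/-- The factor `1/2` in `lamU` is harmless because `p` is odd. -/
lemma norm_half {p : ℕ} [Fact p.Prime] (hp : p ≠ 2) : ‖(1 / 2 : ℚ_[p])‖ = 1 := by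
  have h : ‖((2 : ℕ) : ℚ_[p])‖ = 1 := by
    rw [Padic.norm_natCast_eq_one_iff]
    exact (Nat.coprime_primes Fact.out Nat.prime_two).2 hp
  rw [norm_div, norm_one, show (2 : ℚ_[p]) = ((2 : ℕ) : ℚ_[p]) by norm_num, h, div_one]

lemma norm_lamU_mul_le {p l m : ℕ} [Fact p.Prime] (hp : p ≠ 2) (hl : 2 ≤ l)
    {k k' : Matrix (Fin (2*l)) (Fin (2*l)) ℚ_[p]}
    (hk : ∀ i j, ‖k i j - (if i = j then 1 else 0)‖ ≤ (p : ℝ) ^ (-(m : ℤ)))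
    (hk' : ∀ i j, ‖k' i j - (if i = j then 1 else 0)‖ ≤ (p : ℝ) ^ (-(m : ℤ))) :
    ‖lamU l (k * k') - lamU l k - lamU l k'‖ ≤ (p : ℝ) ^ (-(2 * m : ℤ)) := by
  have hent : ∀ i j : ℕ, i ≠ j →
      ‖ent (k * k') i j - ent k i j - ent k' i j‖ ≤ (p : ℝ) ^ (-(2 * m : ℤ)) := by
    intro i j hij
    unfold ent
    split_ifs with h
    · exact norm_mul_sub_sub_le hk hk' (by simpa using hij)
    · simp only [sub_zero, norm_zero]
      positivity
  have e : lamU l (k * k') - lamU l k - lamU l k' =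
      (∑ i ∈ Finset.range (l - 2),
        (ent (k * k') i (i + 1) - ent k i (i + 1) - ent k' i (i + 1))) +
      (1/2) * (ent (k * k') (l - 2) l - ent k (l - 2) l - ent k' (l - 2) l) := by
    simp only [lamU, Finset.sum_sub_distrib]
    ring
  rw [e]
  refine (Padic.nonarchimedean _ _).trans (max_le ?_ ?_)
  · exact IsUltrametricDist.norm_sum_le_of_forall_le_of_nonneg (by positivity)
      fun i _ => hent _ _ (by omega)
  · rw [norm_mul, norm_half hp, one_mul]
    exact hent _ _ (by omega)

lemma taum_mul {p l m : ℕ} [Fact p.Prime] (hp : p ≠ 2) (hl : 2 ≤ l) {ρ : ℚ_[p]}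
    {ψ₀ : AddChar ℚ_[p] ℂˣ} (hψ1 : ∀ x : ℚ_[p], ‖x‖ ≤ 1 → ψ₀ x = 1)
    {k k' : Matrix (Fin (2*l)) (Fin (2*l)) ℚ_[p]} (hk : Km p l m ρ k) (hk' : Km p l m ρ k') :
    taum p l m ψ₀ (k * k') = taum p l m ψ₀ k * taum p l m ψ₀ k' := by
  have hp0 : (0 : ℝ) < p := by exact_mod_cast (Fact.out : p.Prime).pos
  have herr : ψ₀ ((p : ℚ_[p]) ^ (-(2 * m : ℤ)) *
      (lamU l (k * k') - lamU l k - lamU l k')) = 1 := by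
    apply hψ1
    rw [norm_mul, norm_zpow, Padic.norm_p]
    calc _ ≤ ((p : ℝ)⁻¹) ^ (-(2 * m : ℤ)) * (p : ℝ) ^ (-(2 * m : ℤ)) :=
          mul_le_mul_of_nonneg_left (norm_lamU_mul_le hp hl hk.2 hk'.2) (by positivity)
      _ = 1 := by rw [← mul_zpow, inv_mul_cancel₀ hp0.ne', _root_.one_zpow]
  unfold taum
  rw [← AddChar.map_add_eq_mul, ← mul_one (ψ₀ (_ + _)), ← herr, ← AddChar.map_add_eq_mul]
  congr 1
  ring

lemma emat_mul_ematInv (p l m : ℕ) [Fact p.Prime] : emat p l m * ematInv p l m = 1 := by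
  have hp0 : (p : ℚ_[p]) ≠ 0 := by exact_mod_cast (Fact.out : p.Prime).ne_zero
  rw [emat, ematInv, Matrix.diagonal_mul_diagonal, ← Matrix.diagonal_one]
  congr 1
  funext i
  rw [← zpow_add₀ hp0, add_neg_cancel, zpow_zero]

lemma ent_conj (p l m : ℕ) [Fact p.Prime] (u : Matrix (Fin (2*l)) (Fin (2*l)) ℚ_[p]) (i j : ℕ) :
    ent (ematInv p l m * u * emat p l m) i j =
      (p : ℚ_[p]) ^ (expo l m j - expo l m i) * ent u i j := by
  have hp0 : (p : ℚ_[p]) ≠ 0 := by exact_mod_cast (Fact.out : p.Prime).ne_zero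
  unfold ent
  split_ifs with h
  · rw [emat, ematInv, Matrix.mul_diagonal, Matrix.diagonal_mul, sub_eq_add_neg,
      zpow_add₀ hp0]
    ring
  · simp

lemma lamU_conj (p l m : ℕ) [Fact p.Prime] (hl : 2 ≤ l)
    (u : Matrix (Fin (2*l)) (Fin (2*l)) ℚ_[p]) :
    lamU l (ematInv p l m * u * emat p l m) = (p : ℚ_[p]) ^ (2 * m : ℤ) * lamU l u := by
  have h1 : ∀ i ∈ Finset.range (l - 2), expo l m (i + 1) - expo l m i = 2 * m := by
    intro i hi
    rw [Finset.mem_range] at hi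
    rw [expo, expo, if_pos (by omega), if_pos (by omega),
      show l - 1 - i = (l - 1 - (i + 1)) + 1 by omega]
    push_cast
    ring
  have h2 : expo l m l - expo l m (l - 2) = 2 * m := by
    rw [expo, expo, if_neg (by omega), if_neg (by omega), if_pos (by omega),
      show l - 1 - (l - 2) = 1 by omega]
    push_cast
    ring
  simp only [lamU, ent_conj, h2]
  rw [mul_add, Finset.mul_sum]
  congr 1
  · exact Finset.sum_congr rfl fun i hi => by rw [h1 i hi]
  · ring

/-- `τ_m` is a group homomorphism on `K_m`, hence `ψ_m` is a group homomorphism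
on `H_m`, and `ψ_m` agrees with the generic character `ψ` on `U_m`. -/
theorem statement7 (p : ℕ) [Fact p.Prime] (hp : p ≠ 2) (l : ℕ) (hl : 2 ≤ l)
    (ρ : ℚ_[p]) (hρ1 : ‖ρ‖ = 1) (hρ : ∀ x : ℚ_[p], x * x ≠ ρ)
    (ψ₀ : AddChar ℚ_[p] ℂˣ)
    (hψ1 : ∀ x : ℚ_[p], ‖x‖ ≤ 1 → ψ₀ x = 1)
    (hψ2 : ∃ x : ℚ_[p], ‖x‖ ≤ (p : ℝ) ∧ ψ₀ x ≠ 1)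
    (m : ℕ) (hm : 1 ≤ m) :
    (∀ k k' : Matrix (Fin (2*l)) (Fin (2*l)) ℚ_[p], Km p l m ρ k → Km p l m ρ k' →
      taum p l m ψ₀ (k * k') = taum p l m ψ₀ k * taum p l m ψ₀ k') ∧
    (∀ h h' : Matrix (Fin (2*l)) (Fin (2*l)) ℚ_[p], Hm p l m ρ h → Hm p l m ρ h' →
      psim p l m ψ₀ (h * h') = psim p l m ψ₀ h * psim p l m ψ₀ h') ∧
    (∀ u : Matrix (Fin (2*l)) (Fin (2*l)) ℚ_[p], Um p l m ρ u →
      psim p l m ψ₀ u = ψ₀ (lamU l u)) := by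
  refine ⟨fun k k' hk hk' => taum_mul hp hl hψ1 hk hk', fun h h' hh hh' => ?_, fun u _ => ?_⟩
  · have e : ematInv p l m * (h * h') * emat p l m =
        (ematInv p l m * h * emat p l m) * (ematInv p l m * h' * emat p l m) := by
      calc _ = ematInv p l m * h * 1 * h' * emat p l m := by simp only [mul_one, Matrix.mul_assoc]
        _ = _ := by rw [← emat_mul_ematInv p l m]; simp only [Matrix.mul_assoc]
    rw [psim, e]
    exact taum_mul hp hl hψ1 hh hh'
  · have hp0 : (p : ℚ_[p]) ≠ 0 := by exact_mod_cast (Fact.out : p.Prime).ne_zero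
    rw [psim, taum, lamU_conj p l m hl, ← mul_assoc, ← zpow_add₀ hp0, neg_add_cancel, zpow_zero,
      one_mul]
end
end
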